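/- Let G = (V,E) be a cubic graph on n vertices with n divisible by 6, and let k be an integer with 1 ≤ k ≤ n/2. Let G_1 be the disjoint union of G and (n²−n)/6 copies of the complete bipartite graph K_{3,3}, and let G' be the complement of G_1, so G' is an (n²−4)-regular graph on n² vertices. Then G has a partition {A, B} of V into two parts with |E(A)| + |E(B)| ≤ k if and only if G' admits a partition 𝒫 of its vertex set with d(𝒫) ≥ n²/2 − 1 − 2k/n². -/

import Mathlib

open Finset

/-- The number of edges of `G` with both endpoints in `S`. -/
noncomputable def edgesIn {V : Type*} (G : SimpleGraph V) (S : Finset V) : ℕ :=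
  Set.ncard {e : Sym2 V | e ∈ G.edgeSet ∧ ∀ v ∈ e, v ∈ S}

/-- The density of the set `S` of vertices in `G`: `|E(S)|/|S|`. -/
noncomputable def density {V : Type*} (G : SimpleGraph V) (S : Finset V) : ℚ :=
  (edgesIn G S : ℚ) / (S.card : ℚ)

/-- The density of a partition: the sum of the densities of its parts. -/
noncomputable def partDensity {V : Type*} [DecidableEq V] (G : SimpleGraph V) {s : Finset V}
    (P : Finpartition s) : ℚ :=
  ∑ p ∈ P.parts, density G p

/-!
Write `N` for the order of a `d`-regular graph `G₁`. Complementing turns the density of a partition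
`P` into `(N - #P) / 2` minus its density in `G₁`, so a threshold just below `N / 2 - 1` rules out
three or more parts, and regularity with `d ≥ 2` rules out a single part. If the two parts have `a`
and `b` vertices and `c` edges between them, then `2 e(A) + c = d a` and `2 e(B) + c = d b` give

  `e(A) + e(B) = N / 2 * (e(A) / a + e(B) / b) + c (a - b)² / (4 a b)`.

The last term is nonnegative. Low density makes the parts nearly balanced, so that it is also less
than `1` once `4 k² < d N`; as uncut values are integers, comparing them with `k` is the same as
comparing densities with `2 k / N`. Adding bipartite components to `G` does not change the minimum
uncut value.
-/

section EdgeCounts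

variable {V : Type*} (G : SimpleGraph V)

lemma edgesIn_eq_card_edgeFinset_induce (S : Finset V) [DecidableRel G.Adj] :
    edgesIn G S = #(G.induce (S : Set V)).edgeFinset := by
  have image_edgeSet : {e : Sym2 V | e ∈ G.edgeSet ∧ ∀ v ∈ e, v ∈ S} =
      Sym2.map (↑) '' (G.induce (S : Set V)).edgeSet := by
    ext e
    induction e with
    | _ v w =>
      simp only [Set.mem_ofPred_eq, SimpleGraph.mem_edgeSet, Sym2.mem_iff, forall_eq_or_imp,
        forall_eq, SetLike.coe_sort_coe, Set.mem_image, Sym2.exists, SimpleGraph.comap_adj,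
        Function.Embedding.subtype_apply, Sym2.map_mk, Sym2.eq, Sym2.rel_iff', Prod.mk.injEq,
        Prod.swap_prod_mk, Subtype.exists, exists_and_left, exists_prop]
      grind [G.adj_symm]
  rw [edgesIn, image_edgeSet, Set.ncard_image_of_injective _
    (Sym2.map.injective Subtype.val_injective), ← SimpleGraph.coe_edgeFinset,
    Set.ncard_coe_finset]

lemma card_interedges_eq_sum (S T : Finset V) [DecidableRel G.Adj] :
    #(G.interedges S T) = ∑ v ∈ S, #{w ∈ T | G.Adj v w} := by
  simp only [SimpleGraph.interedges_def, card_filter, sum_product]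

lemma two_mul_edgesIn (S : Finset V) [DecidableRel G.Adj] :
    2 * edgesIn G S = #(G.interedges S S) := by
  classical
  have degree_induce (v : (S : Set V)) :
      (G.induce (S : Set V)).degree v = #{w ∈ S | G.Adj v w} := by
    rw [← SimpleGraph.card_neighborFinset_eq_degree, ← card_map (.subtype (· ∈ (S : Set V)))]
    congr 1
    ext w
    simp [and_comm]
  rw [edgesIn_eq_card_edgeFinset_induce, ← SimpleGraph.sum_degrees_eq_twice_card_edges,
    card_interedges_eq_sum]
  simp only [degree_induce]
  exact sum_coe_sort S fun v ↦ #{w ∈ S | G.Adj v w}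

lemma card_interedges_self_add_compl [DecidableEq V] (S : Finset V) [DecidableRel G.Adj] :
    #(G.interedges S S) + #(Gᶜ.interedges S S) = #S.offDiag := by
  have hdisj : Disjoint (G.interedges S S) (Gᶜ.interedges S S) :=
    disjoint_filter.2 fun e _ hadj hcompl ↦ (G.compl_adj _ _).1 hcompl |>.2 hadj
  rw [← card_union_of_disjoint hdisj]
  congr 1
  ext ⟨v, w⟩
  simp only [mem_union, SimpleGraph.mk_mem_interedges_iff, SimpleGraph.compl_adj, mem_offDiag]
  grind [G.ne_of_adj]

lemma edgesIn_add_edgesIn_compl (S : Finset V) :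
    edgesIn G S + edgesIn Gᶜ S = (#S).choose 2 := by
  classical
  have htwice : 2 * (edgesIn G S + edgesIn Gᶜ S) = #S * #S - #S := by
    rw [mul_add, two_mul_edgesIn, two_mul_edgesIn, card_interedges_self_add_compl, offDiag_card]
  rw [Nat.choose_two_right, Nat.mul_sub_one]
  omega

lemma edgesIn_sum {W : Type*} (H : SimpleGraph W) (S : Finset (V ⊕ W)) :
    edgesIn (G ⊕g H) S = edgesIn G S.toLeft + edgesIn H S.toRight := by
  classical
  have card_interedges_sum : #((G ⊕g H).interedges S S) =
      #(G.interedges S.toLeft S.toLeft) + #(H.interedges S.toRight S.toRight) := by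
    conv_lhs => rw [← S.toLeft_disjSum_toRight]
    simp only [card_interedges_eq_sum, card_filter, sum_disjSum]
    simp [-sum_boole]
  have := two_mul_edgesIn G S.toLeft
  have := two_mul_edgesIn H S.toRight
  have := two_mul_edgesIn (G ⊕g H) S
  omega

lemma two_mul_edgesIn_add_card_interedges_compl [Fintype V] [DecidableEq V] [DecidableRel G.Adj]
    {d : ℕ} (hG : G.IsRegularOfDegree d) (S : Finset V) :
    2 * edgesIn G S + #(G.interedges S Sᶜ) = d * #S := by
  rw [two_mul_edgesIn, card_interedges_eq_sum, card_interedges_eq_sum, ← sum_add_distrib,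
    mul_comm, ← smul_eq_mul]
  refine sum_eq_card_nsmul fun v _ ↦ ?_
  rw [← hG v, ← SimpleGraph.card_neighborFinset_eq_degree, SimpleGraph.neighborFinset_eq_filter,
    ← card_union_of_disjoint (disjoint_filter_filter disjoint_compl_right), ← filter_union,
    union_compl]

lemma two_mul_edgesIn_univ [Fintype V] [DecidableRel G.Adj] {d : ℕ} (hG : G.IsRegularOfDegree d) :
    2 * edgesIn G univ = d * Fintype.card V := by
  classical
  simpa [SimpleGraph.interedges_def] using two_mul_edgesIn_add_card_interedges_compl G hG univ

end EdgeCounts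

section Uncut

variable {V W : Type*} [Fintype V] [DecidableEq V] [Fintype W] [DecidableEq W]

/-- The uncut value of the two-part partition `{S, Sᶜ}`. The second part is encoded as the
complement of the first, and either of them may be empty. -/
noncomputable def uncut (G : SimpleGraph V) (S : Finset V) : ℕ :=
  edgesIn G S + edgesIn G Sᶜ

lemma uncut_compl (G : SimpleGraph V) (S : Finset V) : uncut G Sᶜ = uncut G S := by
  rw [uncut, uncut, compl_compl, add_comm]

lemma uncut_sum (G : SimpleGraph V) (H : SimpleGraph W) (S : Finset (V ⊕ W)) :
    uncut (G ⊕g H) S = uncut G S.toLeft + uncut H S.toRight := by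
  have toLeft_compl : Sᶜ.toLeft = S.toLeftᶜ := by ext; simp
  have toRight_compl : Sᶜ.toRight = S.toRightᶜ := by ext; simp
  simp only [uncut, edgesIn_sum, toLeft_compl, toRight_compl]
  ring

lemma exists_uncut_eq_zero {G : SimpleGraph V} (hG : G.IsBipartite) : ∃ S, uncut G S = 0 := by
  obtain ⟨c⟩ := hG
  have edgesIn_eq_zero (i : Fin 2) (S : Finset V) (hS : ∀ v ∈ S, c v = i) : edgesIn G S = 0 := by
    classical
    have := two_mul_edgesIn G S
    have hempty : G.interedges S S = ∅ := by
      refine eq_empty_of_forall_notMem fun e he ↦ ?_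
      obtain ⟨h₁, h₂, hadj⟩ := G.mem_interedges_iff.1 he
      exact c.valid hadj ((hS _ h₁).trans (hS _ h₂).symm)
    simpa [hempty] using this
  refine ⟨univ.filter (c · = 0), ?_⟩
  rw [uncut, edgesIn_eq_zero 0 _ (by simp), 
    edgesIn_eq_zero 1 _ fun v hv ↦ Fin.eq_one_of_ne_zero _ (by simpa using hv)]

lemma exists_uncut_sum_le_iff (G : SimpleGraph V) {H : SimpleGraph W} (hH : H.IsBipartite)
    {k : ℕ} : (∃ S, uncut (G ⊕g H) S ≤ k) ↔ ∃ S, uncut G S ≤ k := by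
  constructor
  · rintro ⟨S, hS⟩
    exact ⟨S.toLeft, le_of_add_le_left (uncut_sum G H S ▸ hS)⟩
  · rintro ⟨S, hS⟩
    obtain ⟨T, hT⟩ := exists_uncut_eq_zero hH
    exact ⟨S.disjSum T, by simpa [uncut_sum, hT] using hS⟩

lemma exists_disjoint_union_eq_univ_iff_exists_uncut_le (G : SimpleGraph V) {k : ℕ} :
    (∃ A B : Finset V, Disjoint A B ∧ A ∪ B = univ ∧ edgesIn G A + edgesIn G B ≤ k) ↔
      ∃ S, uncut G S ≤ k := by
  constructor
  · rintro ⟨A, B, hdisj, hunion, hk⟩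
    obtain rfl : B = Aᶜ := (IsCompl.of_eq hdisj.eq_bot hunion).compl_eq.symm
    exact ⟨A, hk⟩
  · rintro ⟨S, hS⟩
    exact ⟨S, Sᶜ, disjoint_compl_right, union_compl S, hS⟩

end Uncut

section TwoParts

variable {V : Type*} [Fintype V] [DecidableEq V]

lemma exists_finpartition_parts_eq_pair {S : Finset V} (hS : S.Nonempty) (hSc : Sᶜ.Nonempty) :
    ∃ P : Finpartition (univ : Finset V), P.parts = {S, Sᶜ} :=
  ⟨(Finpartition.indiscrete hS.ne_empty).extend hSc.ne_empty disjoint_compl_right (union_compl S),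
    by simp [Finpartition.extend, pair_comm]⟩

lemma exists_parts_eq_pair {P : Finpartition (univ : Finset V)} (hP : #P.parts = 2) :
    ∃ S : Finset V, S.Nonempty ∧ Sᶜ.Nonempty ∧ P.parts = {S, Sᶜ} := by
  obtain ⟨A, B, hne, hparts⟩ := card_eq_two.1 hP
  have hA : A ∈ P.parts := by simp [hparts]
  have hB : B ∈ P.parts := by simp [hparts]
  have hunion : A ∪ B = univ := by simpa [hparts] using P.sup_parts
  obtain rfl : B = Aᶜ := (IsCompl.of_eq (P.disjoint hA hB hne).eq_bot hunion).compl_eq.symm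
  exact ⟨A, P.nonempty_of_mem_parts hA, P.nonempty_of_mem_parts hB, hparts⟩

lemma partDensity_eq_add {G : SimpleGraph V} {P : Finpartition (univ : Finset V)} {S : Finset V}
    (hS : S.Nonempty) (hP : P.parts = {S, Sᶜ}) :
    partDensity G P = density G S + density G Sᶜ := by
  rw [partDensity, hP, sum_pair (disjoint_compl_right.ne hS.ne_empty)]

end TwoParts

section Density

variable {V : Type*}

lemma density_compl (G : SimpleGraph V) {S : Finset V} (hS : S.Nonempty) :
    density Gᶜ S = ((#S : ℚ) - 1) / 2 - density G S := by
  have hcard : (#S : ℚ) ≠ 0 := by exact_mod_cast hS.card_pos.ne'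
  have hcount : (edgesIn G S + edgesIn Gᶜ S : ℚ) = #S * (#S - 1) / 2 := by
    rw [← Nat.cast_choose_two]
    exact_mod_cast edgesIn_add_edgesIn_compl G S
  unfold density
  field_simp
  linarith

lemma density_nonneg (G : SimpleGraph V) (S : Finset V) : 0 ≤ density G S := by
  unfold density
  positivity

lemma density_univ (G : SimpleGraph V) [Fintype V] [Nonempty V] [DecidableRel G.Adj] {d : ℕ}
    (hG : G.IsRegularOfDegree d) : density G univ = d / 2 := by
  have htwice : (2 * edgesIn G univ : ℚ) = d * Fintype.card V := by
    exact_mod_cast two_mul_edgesIn_univ G hG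
  rw [density, card_univ]
  field_simp
  linarith

variable [DecidableEq V]

lemma partDensity_compl (G : SimpleGraph V) {s : Finset V} (P : Finpartition s) :
    partDensity Gᶜ P = ((#s : ℚ) - #P.parts) / 2 - partDensity G P := by
  unfold partDensity
  rw [sum_congr rfl fun p hp ↦ density_compl G (P.nonempty_of_mem_parts hp), sum_sub_distrib,
    ← sum_div, sum_sub_distrib, ← P.sum_card_parts]
  simp

lemma partDensity_nonneg (G : SimpleGraph V) {s : Finset V} (P : Finpartition s) :
    0 ≤ partDensity G P :=
  sum_nonneg fun p _ ↦ density_nonneg G p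

end Density

section RegularGraphs

lemma add_eq_average_add_defect {K : Type*} [Field K] [NeZero (2 : K)] {a b x y c d : K}
    (ha : a ≠ 0) (hb : b ≠ 0) (hx : 2 * x + c = d * a) (hy : 2 * y + c = d * b) :
    x + y = (a + b) / 2 * (x / a + y / b) + c * (a - b) ^ 2 / (4 * a * b) := by
  have h2 : (2 : K) ≠ 0 := two_ne_zero
  have h4 : (4 : K) = 2 * 2 := by norm_num
  obtain rfl : x = (d * a - c) / 2 := by rw [← hx]; field_simp; ring
  obtain rfl : y = (d * b - c) / 2 := by rw [← hy]; field_simp; ring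
  rw [h4]
  field_simp
  ring

lemma mul_sub_sq_lt {K : Type*} [Field K] [LinearOrder K] [IsStrictOrderedRing K]
    {a b x y c d r : K} (hb : 0 < b) (hba : b ≤ a) (hd : 0 < d) (hy₀ : 0 ≤ y)
    (hx : 2 * x + c = d * a) (hy : 2 * y + c = d * b) (hxr : x ≤ r * a) (hr : r ^ 2 * a < d) :
    c * (a - b) ^ 2 < 4 * a * b := by
  have ha : 0 < a := hb.trans_le hba
  have hcb : c ≤ d * b := by linarith
  have himbalance : d * (a - b) ≤ 2 * r * a := by linarith
  have himbalance₀ : 0 ≤ d * (a - b) := mul_nonneg hd.le (sub_nonneg.2 hba)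
  refine lt_of_mul_lt_mul_left ?_ hd.le
  calc d * (c * (a - b) ^ 2) ≤ d * (d * b * (a - b) ^ 2) := by gcongr
    _ = b * (d * (a - b)) ^ 2 := by ring
    _ ≤ b * (2 * r * a) ^ 2 :=
        mul_le_mul_of_nonneg_left (pow_le_pow_left₀ himbalance₀ himbalance 2) hb.le
    _ = 4 * a * b * (r ^ 2 * a) := by ring
    _ < 4 * a * b * d := by gcongr
    _ = d * (4 * a * b) := by ring

variable {V : Type*} [Fintype V] [DecidableEq V] {G : SimpleGraph V} [DecidableRel G.Adj] {d : ℕ}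
  {S : Finset V}

lemma two_mul_edgesIn_compl_add_card_interedges (hG : G.IsRegularOfDegree d) (S : Finset V) :
    2 * edgesIn G Sᶜ + #(G.interedges S Sᶜ) = d * #Sᶜ := by
  have hcomm : #(G.interedges S Sᶜ) = #(G.interedges Sᶜ S) :=
    have : Std.Symm G.Adj := G.symm
    Rel.card_interedges_comm S Sᶜ
  simpa only [hcomm, compl_compl] using two_mul_edgesIn_add_card_interedges_compl G hG Sᶜ

variable (G S) in
/-- For a regular graph, the excess of the uncut value of `{S, Sᶜ}` over `|V| / 2` times its
density. It vanishes for balanced partitions, and by the junk value `x / 0 = 0` also if a part is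
empty. -/
noncomputable def imbalanceDefect : ℚ :=
  #(G.interedges S Sᶜ) * ((#S : ℚ) - #Sᶜ) ^ 2 / (4 * #S * #Sᶜ)

variable (G S) in
lemma imbalanceDefect_nonneg : 0 ≤ imbalanceDefect G S := by
  unfold imbalanceDefect
  positivity

lemma uncut_eq_average_add_imbalanceDefect (hG : G.IsRegularOfDegree d) (hS : S.Nonempty)
    (hSc : Sᶜ.Nonempty) :
    (uncut G S : ℚ) = Fintype.card V / 2 * (density G S + density G Sᶜ) + imbalanceDefect G S := by
  have hcard : (Fintype.card V : ℚ) = #S + #Sᶜ := by exact_mod_cast (card_add_card_compl S).symm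
  rw [hcard, uncut, Nat.cast_add]
  exact add_eq_average_add_defect (d := (d : ℚ)) (by exact_mod_cast hS.card_pos.ne')
    (by exact_mod_cast hSc.card_pos.ne')
    (by exact_mod_cast two_mul_edgesIn_add_card_interedges_compl G hG S)
    (by exact_mod_cast two_mul_edgesIn_compl_add_card_interedges hG S)

lemma density_add_density_compl_le (hG : G.IsRegularOfDegree d) (hS : S.Nonempty)
    (hSc : Sᶜ.Nonempty) :
    density G S + density G Sᶜ ≤ 2 * uncut G S / Fintype.card V := by
  have hcard : (0 : ℚ) < Fintype.card V := by
    exact_mod_cast hS.card_pos.trans_le (card_le_univ S)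
  rw [le_div_iff₀ hcard]
  linarith [uncut_eq_average_add_imbalanceDefect hG hS hSc, imbalanceDefect_nonneg G S]

lemma imbalanceDefect_lt_one {r : ℚ} (hG : G.IsRegularOfDegree d) (hSc : Sᶜ.Nonempty)
    (hle : #Sᶜ ≤ #S) (hr : density G S ≤ r) (hrd : r ^ 2 * #S < d) :
    imbalanceDefect G S < 1 := by
  have hSc₀ : (0 : ℚ) < #Sᶜ := by exact_mod_cast hSc.card_pos
  have hS₀ : (0 : ℚ) < #S := by exact_mod_cast hSc.card_pos.trans_le hle
  have hd₀ : (0 : ℚ) < d := lt_of_le_of_lt (by positivity) hrd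
  rw [imbalanceDefect, div_lt_one (by positivity)]
  exact mul_sub_sq_lt (x := (edgesIn G S : ℚ)) (y := (edgesIn G Sᶜ : ℚ)) hSc₀
    (by exact_mod_cast hle) hd₀ (Nat.cast_nonneg _)
    (by exact_mod_cast two_mul_edgesIn_add_card_interedges_compl G hG S)
    (by exact_mod_cast two_mul_edgesIn_compl_add_card_interedges hG S)
    ((div_le_iff₀ hS₀).1 hr) hrd

lemma uncut_le_of_density_add_le {k : ℕ} (hG : G.IsRegularOfDegree d) (hS : S.Nonempty)
    (hSc : Sᶜ.Nonempty) (hk : 4 * k ^ 2 < d * Fintype.card V)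
    (hdensity : density G S + density G Sᶜ ≤ 2 * k / Fintype.card V) : uncut G S ≤ k := by
  wlog hle : #Sᶜ ≤ #S generalizing S
  · rw [← uncut_compl]
    exact this hSc (by rwa [compl_compl]) (by rwa [compl_compl, add_comm])
      (by rw [compl_compl]; exact (not_le.1 hle).le)
  have hcard : (0 : ℚ) < Fintype.card V := by
    exact_mod_cast hS.card_pos.trans_le (card_le_univ S)
  have hdensity_left : density G S ≤ 2 * k / Fintype.card V := by
    linarith [density_nonneg G Sᶜ]
  have hd : (2 * k / Fintype.card V : ℚ) ^ 2 * #S < d :=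
    calc (2 * k / Fintype.card V : ℚ) ^ 2 * (#S : ℚ)
        ≤ (2 * k / Fintype.card V : ℚ) ^ 2 * (Fintype.card V : ℚ) := by
          gcongr
          exact card_le_univ S
      _ = 4 * (k : ℚ) ^ 2 / Fintype.card V := by field_simp; ring
      _ < (d : ℚ) := (div_lt_iff₀ hcard).2 (by exact_mod_cast hk)
  have hlt : (uncut G S : ℚ) < k + 1 :=
    calc (uncut G S : ℚ)
        = Fintype.card V / 2 * (density G S + density G Sᶜ) + imbalanceDefect G S :=
          uncut_eq_average_add_imbalanceDefect hG hS hSc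
      _ < Fintype.card V / 2 * (2 * k / Fintype.card V) + 1 := by
          refine add_lt_add_of_le_of_lt ?_ (imbalanceDefect_lt_one hG hSc hle hdensity_left hd)
          gcongr
      _ = k + 1 := by field_simp
  exact Nat.lt_succ_iff.1 (by exact_mod_cast hlt)

lemma nonempty_of_uncut_lt (hG : G.IsRegularOfDegree d) (hS : 2 * uncut G S < d * Fintype.card V) :
    S.Nonempty := by
  by_contra! hempty
  rw [uncut, hempty, compl_empty] at hS
  have := two_mul_edgesIn_univ G hG
  omega

lemma card_parts_eq_two {k : ℕ} (hG : G.IsRegularOfDegree d) (hd : 2 ≤ d)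
    (hk : 4 * k < Fintype.card V) {P : Finpartition (univ : Finset V)}
    (hP : (Fintype.card V : ℚ) / 2 - 1 - 2 * k / Fintype.card V ≤ partDensity Gᶜ P) :
    #P.parts = 2 := by
  have hcard : (0 : ℚ) < Fintype.card V := by exact_mod_cast hk.pos
  have : Nonempty V := Fintype.card_pos_iff.1 hk.pos
  have hkV : 2 * k / Fintype.card V < (1 / 2 : ℚ) := by
    have hkℚ : (4 * k : ℚ) < Fintype.card V := by exact_mod_cast hk
    rw [div_lt_iff₀ hcard]
    linarith
  rw [partDensity_compl, card_univ] at hP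
  have hlt : #P.parts < 3 := by
    have : (#P.parts : ℚ) < 3 := by linarith [partDensity_nonneg G P]
    exact_mod_cast this
  have hpos : 0 < #P.parts := card_pos.2 (P.parts_nonempty univ_nonempty.ne_empty)
  have hne : #P.parts ≠ 1 := by
    intro hone
    obtain ⟨S, hparts⟩ := card_eq_one.1 hone
    obtain rfl : S = univ := by simpa [hparts] using P.sup_parts
    have hdℚ : (2 : ℚ) ≤ d := by exact_mod_cast hd
    rw [partDensity, hparts, card_singleton, sum_singleton, density_univ G hG, Nat.cast_one] at hP
    linarith
  omega

theorem exists_uncut_le_iff_exists_partDensity_compl {k : ℕ} (hG : G.IsRegularOfDegree d)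
    (hd : 2 ≤ d) (hk : 4 * k < Fintype.card V) (hkd : 4 * k ^ 2 < d * Fintype.card V) :
    (∃ S, uncut G S ≤ k) ↔ ∃ P : Finpartition (univ : Finset V),
      (Fintype.card V : ℚ) / 2 - 1 - 2 * k / Fintype.card V ≤ partDensity Gᶜ P := by
  constructor
  · rintro ⟨S, huncut⟩
    have hsmall : 2 * uncut G S < d * Fintype.card V := by nlinarith
    have hS : S.Nonempty := nonempty_of_uncut_lt hG hsmall
    have hSc : Sᶜ.Nonempty := nonempty_of_uncut_lt hG (by rwa [uncut_compl])
    obtain ⟨P, hP⟩ := exists_finpartition_parts_eq_pair hS hSc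
    have hdensity : density G S + density G Sᶜ ≤ 2 * k / Fintype.card V :=
      (density_add_density_compl_le hG hS hSc).trans (by gcongr)
    refine ⟨P, ?_⟩
    rw [partDensity_compl, partDensity_eq_add hS hP, card_univ, hP,
      card_pair (disjoint_compl_right.ne hS.ne_empty)]
    push_cast
    linarith
  · rintro ⟨P, hP⟩
    have htwo := card_parts_eq_two hG hd hk hP
    obtain ⟨S, hS, hSc, hparts⟩ := exists_parts_eq_pair htwo
    rw [partDensity_compl, partDensity_eq_add hS hparts, card_univ, htwo] at hP
    push_cast at hP
    exact ⟨S, uncut_le_of_density_add_le hG hS hSc hkd (by linarith)⟩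

end RegularGraphs

section Constructions

variable {V W : Type*} {G : SimpleGraph V} {H : SimpleGraph W}

lemma isRegularOfDegree_sum [G.LocallyFinite] [H.LocallyFinite] [(G ⊕g H).LocallyFinite] {d : ℕ}
    (hG : G.IsRegularOfDegree d) (hH : H.IsRegularOfDegree d) :
    (G ⊕g H).IsRegularOfDegree d := by
  rintro (v | w)
  · have hmap : (G ⊕g H).neighborFinset (.inl v) = (G.neighborFinset v).map .inl := by
      ext (x | x) <;> simp
    rw [SimpleGraph.degree, hmap, card_map, SimpleGraph.card_neighborFinset_eq_degree, hG v]
  · have hmap : (G ⊕g H).neighborFinset (.inr w) = (H.neighborFinset w).map .inr := by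
      ext (x | x) <;> simp
    rw [SimpleGraph.degree, hmap, card_map, SimpleGraph.card_neighborFinset_eq_degree, hH w]

lemma isRegularOfDegree_completeBipartiteGraph [Fintype V]
    [(completeBipartiteGraph V V).LocallyFinite] :
    (completeBipartiteGraph V V).IsRegularOfDegree (Fintype.card V) := by
  rintro (v | v)
  · have hmap : (completeBipartiteGraph V V).neighborFinset (.inl v) = univ.map .inr := by
      ext (x | x) <;> simp
    rw [SimpleGraph.degree, hmap, card_map, card_univ]
  · have hmap : (completeBipartiteGraph V V).neighborFinset (.inr v) = univ.map .inl := by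
      ext (x | x) <;> simp
    rw [SimpleGraph.degree, hmap, card_map, card_univ]

lemma isRegularOfDegree_bot_boxProd {ι : Type*} [H.LocallyFinite]
    [((⊥ : SimpleGraph ι) □ H).LocallyFinite] {d : ℕ} (hH : H.IsRegularOfDegree d) :
    ((⊥ : SimpleGraph ι) □ H).IsRegularOfDegree d := by
  rintro ⟨i, w⟩
  have hmap : ((⊥ : SimpleGraph ι) □ H).neighborFinset (i, w) =
      (H.neighborFinset w).map (.sectR i W) := by
    ext ⟨j, x⟩
    simp [and_comm, eq_comm]
  rw [SimpleGraph.degree, hmap, card_map, SimpleGraph.card_neighborFinset_eq_degree, hH w]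

lemma isBipartite_bot_boxProd {ι : Type*} (hH : H.IsBipartite) :
    ((⊥ : SimpleGraph ι) □ H).IsBipartite :=
  hH.of_hom ⟨Prod.snd, by simp +contextual [SimpleGraph.boxProd_adj]⟩

end Constructions

theorem stmt17_general {V W : Type*} [Fintype V] [DecidableEq V] [Fintype W] [DecidableEq W]
    (G : SimpleGraph V) [G.LocallyFinite] (H : SimpleGraph W) [H.LocallyFinite] {d k N : ℕ}
    (hG : G.IsRegularOfDegree d) (hH : H.IsRegularOfDegree d) (hbip : H.IsBipartite)
    (hN : Fintype.card (V ⊕ W) = N) (hd : 2 ≤ d) (hk : 4 * k < N) (hkd : 4 * k ^ 2 < d * N) :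
    (∃ A B : Finset V, Disjoint A B ∧ A ∪ B = univ ∧ edgesIn G A + edgesIn G B ≤ k) ↔
      ∃ P : Finpartition (univ : Finset (V ⊕ W)),
        (N : ℚ) / 2 - 1 - 2 * (k : ℚ) / N ≤ partDensity (G ⊕g H)ᶜ P := by
  classical
  subst hN
  rw [exists_disjoint_union_eq_univ_iff_exists_uncut_le, ← exists_uncut_sum_le_iff G hbip]
  exact exists_uncut_le_iff_exists_partDensity_compl
    (by convert isRegularOfDegree_sum hG hH) hd hk hkd

theorem stmt17 {V : Type*} [Fintype V] [DecidableEq V] (G : SimpleGraph V) [DecidableRel G.Adj]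
    (n k : ℕ) (hn : Fintype.card V = n) (h6 : 6 ∣ n)
    (hcubic : ∀ v : V, G.degree v = 3)
    (hk1 : 1 ≤ k) (hk2 : 2 * k ≤ n)
    -- `G₁` is the disjoint union of `G` and `(n² − n)/6` copies of `K_{3,3}`,
    -- and `G'` is the complement of `G₁`:
    (G₁ : SimpleGraph (V ⊕ Fin ((n ^ 2 - n) / 6) × (Fin 3 ⊕ Fin 3)))
    (hG₁ : G₁ = G ⊕g ((⊥ : SimpleGraph (Fin ((n ^ 2 - n) / 6))) □
      completeBipartiteGraph (Fin 3) (Fin 3)))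
    (G' : SimpleGraph (V ⊕ Fin ((n ^ 2 - n) / 6) × (Fin 3 ⊕ Fin 3)))
    (hG' : G' = G₁ᶜ) :
    (∃ A B : Finset V, Disjoint A B ∧ A ∪ B = univ ∧ edgesIn G A + edgesIn G B ≤ k) ↔
      ∃ P : Finpartition (univ : Finset (V ⊕ Fin ((n ^ 2 - n) / 6) × (Fin 3 ⊕ Fin 3))),
        (n : ℚ) ^ 2 / 2 - 1 - 2 * (k : ℚ) / (n : ℚ) ^ 2 ≤ partDensity G' P := by
  classical
  subst hG' hG₁
  have hn6 : 6 ≤ n := Nat.le_of_dvd (by omega) h6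
  have hcard : Fintype.card (V ⊕ Fin ((n ^ 2 - n) / 6) × (Fin 3 ⊕ Fin 3)) = n ^ 2 := by
    have hcopies : 6 ∣ n ^ 2 - n := Nat.dvd_sub (dvd_pow h6 two_ne_zero) h6
    simp [hn, Nat.div_mul_cancel hcopies, Nat.le_self_pow]
  exact_mod_cast stmt17_general (d := 3) (k := k) G _ hcubic
    (isRegularOfDegree_bot_boxProd (isRegularOfDegree_completeBipartiteGraph (V := Fin 3)))
    (isBipartite_bot_boxProd (SimpleGraph.CompleteBipartiteGraph.bicoloring _ _).colorable)
    hcard (by norm_num) (by nlinarith) (by nlinarith)
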